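/- arXiv:2508.04639 — 3 statements merged into one kernel-verified Lean document; each statement's English description precedes it below -/
import Mathlib

section
/- Let a < b be real numbers, let f₁ : ℝ → ℝ be differentiable with f₁(x) ≠ 0 for all x ∈ ℝ, let h₁ : ℝ → ℝ be continuous with h₁(x) ≠ 0 for all x ∈ ℝ, and let x₀ ∈ ℝ. Define F(x) = f₁(x)·∫_{x₀}^{x} h₁(t)/f₁(t) dt, set c = −(∫_a^b f₁(x)·F(x) dx)/(∫_a^b f₁(x)² dx), and define f₂ = F + c·f₁. Then: (i) ∫_a^b f₁(x)·f₂(x) dx = 0; (ii) the Wronskian W(f₁,f₂)(x) = h₁(x)·f₁(x) ≠ 0 for all x ∈ ℝ; and (iii) f₁ and f₂ are linearly independent over ℝ in the vector space of functions ℝ → ℝ. -/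
/-!
Write `F = f₁ · G` with `G x = ∫ t in x₀..x, h₁ t / f₁ t`. Since `h₁ / f₁` is continuous, the
fundamental theorem of calculus gives `G' = h₁ / f₁`, so `f₂ = f₁ · (G + c)` is differentiable and
`f₁ f₂' - f₁' f₂ = f₁² G' = h₁ f₁`, which never vanishes. Orthogonality is the Gram–Schmidt choice
of `c`, using `∫ f₁² > 0`. Finally, if `s f₁ + t f₂ = 0`, then differentiating and eliminating `s`
gives `t · W(f₁, f₂) = 0`, hence `t = 0` and then `s = 0`.
-/


/-- The `N = 2` case of the Wronski orthogonalization process with the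
`L²[a,b]` pairing: with `F x = f₁ x * ∫ t in x₀..x, h₁ t / f₁ t`,
`c = −(∫ x in a..b, f₁ x * F x) / (∫ x in a..b, (f₁ x)²)` and `f₂ = F + c • f₁`,
the function `f₂` is `L²[a,b]`-orthogonal to `f₁`, the Wronskian
`f₁ f₂′ − f₁′ f₂` equals `h₁ · f₁` and is nowhere zero, and `f₁, f₂` are
linearly independent. -/
theorem wronski_orthogonalization_N2
    (a b : ℝ) (hab : a < b) (x₀ : ℝ)
    (f₁ h₁ : ℝ → ℝ) (hf₁ : Differentiable ℝ f₁) (hf₁ne : ∀ x, f₁ x ≠ 0)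
    (hh₁ : Continuous h₁) (hh₁ne : ∀ x, h₁ x ≠ 0)
    (F : ℝ → ℝ) (hF : ∀ x, F x = f₁ x * ∫ t in x₀..x, h₁ t / f₁ t)
    (c : ℝ)
    (hc : c = -(∫ x in a..b, f₁ x * F x) / (∫ x in a..b, (f₁ x) ^ 2))
    (f₂ : ℝ → ℝ) (hf₂ : ∀ x, f₂ x = F x + c * f₁ x) :
    (∫ x in a..b, f₁ x * f₂ x) = 0 ∧
      (∀ x, f₁ x * deriv f₂ x - deriv f₁ x * f₂ x = h₁ x * f₁ x ∧
        h₁ x * f₁ x ≠ 0) ∧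
      LinearIndependent ℝ ![f₁, f₂] := by
  have hcont : Continuous fun t => h₁ t / f₁ t := hh₁.div hf₁.continuous hf₁ne
  have hFd : ∀ x, HasDerivAt F
      (deriv f₁ x * (∫ t in x₀..x, h₁ t / f₁ t) + f₁ x * (h₁ x / f₁ x)) x := by
    intro x
    rw [funext hF]
    exact (hf₁ x).hasDerivAt.mul (hcont.integral_hasStrictDerivAt x₀ x).hasDerivAt
  have hf₂d : ∀ x, HasDerivAt f₂
      (deriv f₁ x * (∫ t in x₀..x, h₁ t / f₁ t) + f₁ x * (h₁ x / f₁ x) + c * deriv f₁ x) x := by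
    intro x
    rw [funext hf₂]
    exact (hFd x).add ((hf₁ x).hasDerivAt.const_mul c)
  have hW : ∀ x, f₁ x * deriv f₂ x - deriv f₁ x * f₂ x = h₁ x * f₁ x := by
    intro x
    rw [(hf₂d x).deriv, hf₂, hF, mul_div_cancel₀ _ (hf₁ne x)]
    ring
  have hf₁c : Continuous f₁ := hf₁.continuous
  have hFc : Continuous F := continuous_iff_continuousAt.2 fun x => (hFd x).continuousAt
  refine ⟨?_, fun x => ⟨hW x, mul_ne_zero (hh₁ne x) (hf₁ne x)⟩, ?_⟩
  · have hpos : 0 < ∫ x in a..b, (f₁ x) ^ 2 :=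
      intervalIntegral.intervalIntegral_pos_of_pos ((hf₁c.pow 2).intervalIntegrable a b)
        (fun x => by have := hf₁ne x; positivity) hab
    have hsplit : ∀ x, f₁ x * f₂ x = f₁ x * F x + c * (f₁ x) ^ 2 := by
      intro x
      rw [hf₂]
      ring
    simp only [hsplit]
    have hi₁ : IntervalIntegrable (fun x => f₁ x * F x) MeasureTheory.volume a b :=
      (hf₁c.mul hFc).intervalIntegrable a b
    have hi₂ : IntervalIntegrable (fun x => c * (f₁ x) ^ 2) MeasureTheory.volume a b :=
      (continuous_const.mul (hf₁c.pow 2)).intervalIntegrable a b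
    rw [intervalIntegral.integral_add hi₁ hi₂,
      intervalIntegral.integral_const_mul, hc, div_mul_cancel₀ _ hpos.ne']
    ring
  · rw [LinearIndependent.pair_iff]
    intro s t hst
    have hd : s * deriv f₁ x₀ + t * deriv f₂ x₀ = 0 := by
      have h := ((hf₁ x₀).hasDerivAt.const_mul s).add
        ((hf₂d x₀).differentiableAt.hasDerivAt.const_mul t)
      have h0 : HasDerivAt (s • f₁ + t • f₂) (s * deriv f₁ x₀ + t * deriv f₂ x₀) x₀ := h
      rw [hst] at h0
      exact h0.unique (hasDerivAt_const x₀ (0 : ℝ))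
    have hv : s * f₁ x₀ + t * f₂ x₀ = 0 := congrFun hst x₀
    have ht : t = 0 := by
      have h : t * (h₁ x₀ * f₁ x₀) = 0 := by
        linear_combination -t * hW x₀ + f₁ x₀ * hd - deriv f₁ x₀ * hv
      exact (mul_eq_zero.1 h).resolve_right (mul_ne_zero (hh₁ne x₀) (hf₁ne x₀))
    subst ht
    exact ⟨by simpa [hf₁ne x₀] using hv, rfl⟩
end

section
/- Let f₁, f₂ : ℝ → ℝ be twice continuously differentiable with W(x) = f₁(x)·f₂′(x) − f₁′(x)·f₂(x) ≠ 0 for all x ∈ ℝ. If y : ℝ → ℝ is twice differentiable and satisfies W(x)·y′′(x) − (f₁(x)·f₂′′(x) − f₁′′(x)·f₂(x))·y′(x) + (f₁′(x)·f₂′′(x) − f₁′′(x)·f₂′(x))·y(x) = 0 for all x ∈ ℝ, then there exist constants c₁, c₂ ∈ ℝ such that y = c₁·f₁ + c₂·f₂. -/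
/-! For any two solutions `g`, `y` of `W y′′ − A y′ + B y = 0` with `W′ = A`, Abel's identity says
that `g y′ − g′ y` is proportional to `W`. Both `f₁` and `f₂` solve the equation (a Wronskian with a
repeated row vanishes), so `f₁ y′ − f₁′ y = k₁ W` and `f₂ y′ − f₂′ y = k₂ W` for constants `k₁`, `k₂`.
Eliminating `y′` gives `W y = W (k₁ f₂ − k₂ f₁)`, and `W` can be cancelled. -/

/-- Abel's identity: two solutions of `W u′′ − A u′ + B u = 0` with `W′ = A` have a Wronskian
proportional to `W`, since the numerator of the derivative of the quotient is
`g` times the equation for `y` minus `y` times the equation for `g`. -/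
lemma exists_wronskian_eq_const_mul {W A B g y : ℝ → ℝ}
    (hWA : ∀ x, HasDerivAt W (A x) x) (hWne : ∀ x, W x ≠ 0)
    (hg : Differentiable ℝ g) (hg' : Differentiable ℝ (deriv g))
    (hy : Differentiable ℝ y) (hy' : Differentiable ℝ (deriv y))
    (hgode : ∀ x, W x * deriv (deriv g) x - A x * deriv g x + B x * g x = 0)
    (hyode : ∀ x, W x * deriv (deriv y) x - A x * deriv y x + B x * y x = 0) :
    ∃ k : ℝ, ∀ x, g x * deriv y x - deriv g x * y x = k * W x := by
  have hq : ∀ x, HasDerivAt (fun x => (g x * deriv y x - deriv g x * y x) / W x) 0 x := by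
    intro x
    have h := ((((hg x).hasDerivAt.mul (hy' x).hasDerivAt).sub
      ((hg' x).hasDerivAt.mul (hy x).hasDerivAt)).div (hWA x) (hWne x))
    refine h.congr_deriv ?_
    simp only [Pi.sub_apply, Pi.mul_apply]
    rw [div_eq_zero_iff]
    left
    linear_combination g x * hyode x - y x * hgode x
  refine ⟨(g 0 * deriv y 0 - deriv g 0 * y 0) / W 0, fun x => ?_⟩
  have hconst := is_const_of_deriv_eq_zero (fun x => (hq x).differentiableAt)
    (fun x => (hq x).deriv) x 0
  exact (div_eq_iff (hWne x)).mp hconst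

/-- Fundamental system: if `f₁, f₂` are twice continuously differentiable with
nowhere vanishing Wronskian `W = f₁ f₂′ − f₁′ f₂`, then every twice
differentiable solution `y` of the homogeneous equation
`W y′′ − (f₁ f₂′′ − f₁′′ f₂) y′ + (f₁′ f₂′′ − f₁′′ f₂′) y = 0` is a linear
combination of `f₁` and `f₂`. -/
theorem homogeneous_second_order_fundamental_system
    (f₁ f₂ : ℝ → ℝ)
    (hf₁ : ContDiff ℝ 2 f₁) (hf₂ : ContDiff ℝ 2 f₂)
    (W : ℝ → ℝ) (hW : ∀ x, W x = f₁ x * deriv f₂ x - deriv f₁ x * f₂ x)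
    (hWne : ∀ x, W x ≠ 0)
    (y : ℝ → ℝ) (hy : Differentiable ℝ y) (hy' : Differentiable ℝ (deriv y))
    (hode : ∀ x, W x * deriv (deriv y) x
        - (f₁ x * deriv (deriv f₂) x - deriv (deriv f₁) x * f₂ x) * deriv y x
        + (deriv f₁ x * deriv (deriv f₂) x - deriv (deriv f₁) x * deriv f₂ x) * y x
      = 0) :
    ∃ c₁ c₂ : ℝ, ∀ x, y x = c₁ * f₁ x + c₂ * f₂ x := by
  have hd₁ : Differentiable ℝ f₁ := hf₁.differentiable (by norm_num)
  have hd₂ : Differentiable ℝ f₂ := hf₂.differentiable (by norm_num)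
  have hd₁' : Differentiable ℝ (deriv f₁) := hf₁.differentiable_deriv_two
  have hd₂' : Differentiable ℝ (deriv f₂) := hf₂.differentiable_deriv_two
  have hWA : ∀ x, HasDerivAt W
      (f₁ x * deriv (deriv f₂) x - deriv (deriv f₁) x * f₂ x) x := by
    intro x
    obtain rfl : W = fun x => f₁ x * deriv f₂ x - deriv f₁ x * f₂ x := funext hW
    refine (((hd₁ x).hasDerivAt.mul (hd₂' x).hasDerivAt).sub
      ((hd₁' x).hasDerivAt.mul (hd₂ x).hasDerivAt)).congr_deriv ?_
    ring
  obtain ⟨k₁, hk₁⟩ := exists_wronskian_eq_const_mul hWA hWne hd₁ hd₁' hy hy'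
    (fun x => by rw [hW]; ring) hode
  obtain ⟨k₂, hk₂⟩ := exists_wronskian_eq_const_mul hWA hWne hd₂ hd₂' hy hy'
    (fun x => by rw [hW]; ring) hode
  refine ⟨-k₂, k₁, fun x => mul_left_cancel₀ (hWne x) ?_⟩
  linear_combination f₂ x * hk₁ x - f₁ x * hk₂ x + y x * hW x
end

section
/- Let a < b be real numbers and x₀ ∈ ℝ. Let f₁, f₂ : ℝ → ℝ be twice continuously differentiable with W(x) = f₁(x)·f₂′(x) − f₁′(x)·f₂(x) ≠ 0 for all x ∈ ℝ, and suppose ∫_a^b f₁(x)·f₂(x) dx = 0. Let h₂ : ℝ → ℝ be continuous with h₂(x) ≠ 0 for all x ∈ ℝ. Define F(x) = −f₁(x)·∫_{x₀}^{x} f₂(t)·h₂(t)/W(t) dt + f₂(x)·∫_{x₀}^{x} f₁(t)·h₂(t)/W(t) dt, and define f₃ = F − ((∫_a^b f₁F)/(∫_a^b f₁²))·f₁ − ((∫_a^b f₂F)/(∫_a^b f₂²))·f₂. Then: (i) ∫_a^b f₁(x)·f₃(x) dx = 0 and ∫_a^b f₂(x)·f₃(x) dx = 0; (ii) the third-order Wronskian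 satisfies W(f₁,f₂,f₃)(x) = h₂(x)·W(x) ≠ 0 for all x ∈ ℝ; and (iii) f₁, f₂, f₃ are linearly independent over ℝ in the vector space of functions ℝ → ℝ. -/
/-! The function `F` is the variation-of-parameters solution built from `f₁` and `f₂`, so after
absorbing the projection coefficients `f₃ = p f₁ + q f₂` with `p' = -f₂ h₂ / W` and `q' = f₁ h₂ / W`. These satisfy
`p' f₁ + q' f₂ = 0` and `p' f₁' + q' f₂' = h₂`, whence `f₃' = p f₁' + q f₂'` and
`f₃'' = p f₁'' + q f₂'' + h₂`. Column reduction turns the last column of the Wronskian matrix into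
`(0, 0, h₂)`, which gives `W(f₁, f₂, f₃) = h₂ W`. A nonzero Wronskian at one point forces linear
independence. Orthogonality is the Gram–Schmidt computation; it needs `∫ fᵢ² ≠ 0`, which holds
because a function vanishing on `[a, b]` also has zero derivative at the midpoint, where `W` would
then vanish. -/

/-- The Wronskian of `n` functions `f 0, …, f (n-1) : ℝ → ℝ` at `x`:
the determinant of the `n × n` matrix whose `(i, j)` entry is the `i`-th
derivative of `f j` at `x`. -/
noncomputable def wronskian {n : ℕ} (f : Fin n → ℝ → ℝ) (x : ℝ) : ℝ :=
  (Matrix.of fun i j : Fin n => iteratedDeriv (i : ℕ) (f j) x).det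

theorem integral_sq_ne_zero {a b : ℝ} (hab : a < b) {f : ℝ → ℝ} (hf : Continuous f)
    (hne : ∀ x, f x ≠ 0 ∨ deriv f x ≠ 0) : (∫ x in a..b, (f x) ^ 2) ≠ 0 := by
  refine (intervalIntegral.integral_pos hab (hf.pow 2).continuousOn
    (fun x _ => sq_nonneg (f x)) ?_).ne'
  by_contra! h
  have hz : ∀ x ∈ Set.Icc a b, f x = 0 := fun x hx =>
    pow_eq_zero_iff two_ne_zero |>.1 (le_antisymm (h x hx) (sq_nonneg _))
  have hm : (a + b) / 2 ∈ Set.Ioo a b := ⟨by linarith, by linarith⟩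
  have he : f =ᶠ[nhds ((a + b) / 2)] fun _ => 0 := by
    filter_upwards [Icc_mem_nhds hm.1 hm.2] with x hx using hz x hx
  rcases hne ((a + b) / 2) with h0 | h0
  · exact h0 (hz _ ⟨hm.1.le, hm.2.le⟩)
  · exact h0 (by rw [he.deriv_eq]; simp)

/-- The `N = 3` step of the Wronski orthogonalization process with the
`L²[a,b]` pairing: given `f₁, f₂` twice continuously differentiable with
nowhere-vanishing Wronskian `W` and `∫_a^b f₁ f₂ = 0`, and a nowhere-vanishing
continuous weight `h₂`, the function
`F x = −f₁ x ∫_{x₀}^x f₂ h₂ / W + f₂ x ∫_{x₀}^x f₁ h₂ / W` corrected by its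
`L²[a,b]` projections onto `f₁` and `f₂` yields `f₃` orthogonal to both, with
third-order Wronskian `W(f₁,f₂,f₃) = h₂ · W ≠ 0`, and `f₁, f₂, f₃` linearly
independent. -/
theorem wronski_orthogonalization_N3
    (a b : ℝ) (hab : a < b) (x₀ : ℝ)
    (f₁ f₂ : ℝ → ℝ) (hf₁ : ContDiff ℝ 2 f₁) (hf₂ : ContDiff ℝ 2 f₂)
    (W : ℝ → ℝ) (hW : ∀ x, W x = f₁ x * deriv f₂ x - deriv f₁ x * f₂ x)
    (hWne : ∀ x, W x ≠ 0)
    (horth : (∫ x in a..b, f₁ x * f₂ x) = 0)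
    (h₂ : ℝ → ℝ) (hh₂ : Continuous h₂) (hh₂ne : ∀ x, h₂ x ≠ 0)
    (F : ℝ → ℝ)
    (hF : ∀ x, F x =
      -(f₁ x) * (∫ t in x₀..x, f₂ t * h₂ t / W t) +
        f₂ x * ∫ t in x₀..x, f₁ t * h₂ t / W t)
    (f₃ : ℝ → ℝ)
    (hf₃ : ∀ x, f₃ x = F x
      - ((∫ s in a..b, f₁ s * F s) / (∫ s in a..b, (f₁ s) ^ 2)) * f₁ x
      - ((∫ s in a..b, f₂ s * F s) / (∫ s in a..b, (f₂ s) ^ 2)) * f₂ x) :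
    ((∫ x in a..b, f₁ x * f₃ x) = 0 ∧ (∫ x in a..b, f₂ x * f₃ x) = 0) ∧
      (∀ x, wronskian ![f₁, f₂, f₃] x = h₂ x * W x ∧ h₂ x * W x ≠ 0) ∧
      LinearIndependent ℝ ![f₁, f₂, f₃] := by
  have hc₁ := hf₁.continuous
  have hc₂ := hf₂.continuous
  have hdf₁ : ContDiff ℝ 1 (deriv f₁) := hf₁.deriv' (n := 1)
  have hdf₂ : ContDiff ℝ 1 (deriv f₂) := hf₂.deriv' (n := 1)
  have d₁ : ∀ x, HasDerivAt f₁ (deriv f₁ x) x := fun x =>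
    (hf₁.differentiable (by norm_num) x).hasDerivAt
  have d₂ : ∀ x, HasDerivAt f₂ (deriv f₂ x) x := fun x =>
    (hf₂.differentiable (by norm_num) x).hasDerivAt
  have dd₁ : ∀ x, HasDerivAt (deriv f₁) (deriv (deriv f₁) x) x := fun x =>
    (hdf₁.differentiable (by norm_num) x).hasDerivAt
  have dd₂ : ∀ x, HasDerivAt (deriv f₂) (deriv (deriv f₂) x) x := fun x =>
    (hdf₂.differentiable (by norm_num) x).hasDerivAt
  have hWc : Continuous W := by
    rw [funext hW]
    exact (hc₁.mul hdf₂.continuous).sub (hdf₁.continuous.mul hc₂)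
  have kA : Continuous fun t => f₂ t * h₂ t / W t := (hc₂.mul hh₂).div hWc hWne
  have kB : Continuous fun t => f₁ t * h₂ t / W t := (hc₁.mul hh₂).div hWc hWne
  set c₁ := (∫ s in a..b, f₁ s * F s) / (∫ s in a..b, (f₁ s) ^ 2) with hc₁def
  set c₂ := (∫ s in a..b, f₂ s * F s) / (∫ s in a..b, (f₂ s) ^ 2) with hc₂def
  obtain ⟨p, hp⟩ : ∃ p : ℝ → ℝ, ∀ x, p x = -(∫ t in x₀..x, f₂ t * h₂ t / W t) - c₁ :=
    ⟨_, fun _ => rfl⟩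
  obtain ⟨q, hq⟩ : ∃ q : ℝ → ℝ, ∀ x, q x = (∫ t in x₀..x, f₁ t * h₂ t / W t) - c₂ :=
    ⟨_, fun _ => rfl⟩
  have dp : ∀ x, HasDerivAt p (-(f₂ x * h₂ x / W x)) x := fun x => by
    rw [funext hp]
    exact (kA.integral_hasStrictDerivAt x₀ x).hasDerivAt.neg.sub_const c₁
  have dq : ∀ x, HasDerivAt q (f₁ x * h₂ x / W x) x := fun x => by
    rw [funext hq]
    exact (kB.integral_hasStrictDerivAt x₀ x).hasDerivAt.sub_const c₂
  have e₃ : ∀ x, f₃ x = p x * f₁ x + q x * f₂ x := fun x => by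
    rw [hf₃, hF, hp, hq]; ring
  have d₃ : ∀ x, HasDerivAt f₃ (p x * deriv f₁ x + q x * deriv f₂ x) x := fun x => by
    rw [funext e₃]
    refine (((dp x).mul (d₁ x)).add ((dq x).mul (d₂ x))).congr_deriv ?_
    ring
  have e₃' : deriv f₃ = fun x => p x * deriv f₁ x + q x * deriv f₂ x :=
    funext fun x => (d₃ x).deriv
  have dd₃ : ∀ x, HasDerivAt (deriv f₃)
      (p x * deriv (deriv f₁) x + q x * deriv (deriv f₂) x + h₂ x) x := fun x => by
    rw [e₃']
    refine (((dp x).mul (dd₁ x)).add ((dq x).mul (dd₂ x))).congr_deriv ?_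
    have hw := hWne x
    field_simp
    rw [hW x]
    ring
  have hwr : ∀ x, wronskian ![f₁, f₂, f₃] x = h₂ x * W x := fun x => by
    have e₃'' := (dd₃ x).deriv
    simp only [wronskian, Matrix.det_fin_three, Matrix.of_apply, iteratedDeriv_succ,
      iteratedDeriv_zero, Fin.val_zero, Fin.val_one, Fin.val_two, Matrix.cons_val]
    rw [e₃'', (d₃ x).deriv, e₃ x, hW x]
    ring
  have hne : ∀ x, h₂ x * W x ≠ 0 := fun x => mul_ne_zero (hh₂ne x) (hWne x)
  have hc₃ : Continuous f₃ := continuous_iff_continuousAt.2 fun x => (d₃ x).continuousAt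
  have hFc : Continuous F := by
    have : F = fun x => f₃ x + c₁ * f₁ x + c₂ * f₂ x := funext fun x => by
      rw [hf₃ x]; ring
    rw [this]
    fun_prop
  have hn₁ : (∫ x in a..b, (f₁ x) ^ 2) ≠ 0 := integral_sq_ne_zero hab hc₁ fun x => by
    by_contra! h
    exact hWne x (by rw [hW, h.1, h.2]; ring)
  have hn₂ : (∫ x in a..b, (f₂ x) ^ 2) ≠ 0 := integral_sq_ne_zero hab hc₂ fun x => by
    by_contra! h
    exact hWne x (by rw [hW, h.1, h.2]; ring)
  have expand : ∀ g : ℝ → ℝ, Continuous g → (∫ x in a..b, g x * f₃ x) =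
      (∫ x in a..b, g x * F x) - c₁ * (∫ x in a..b, g x * f₁ x)
        - c₂ * ∫ x in a..b, g x * f₂ x := fun g hg => by
    rw [← intervalIntegral.integral_const_mul, ← intervalIntegral.integral_const_mul,
      ← intervalIntegral.integral_sub, ← intervalIntegral.integral_sub]
    · refine intervalIntegral.integral_congr fun x _ => ?_
      simp only [hf₃ x]
      ring
    all_goals exact Continuous.intervalIntegrable (by fun_prop) _ _
  refine ⟨⟨?_, ?_⟩, fun x => ⟨hwr x, hne x⟩, ?_⟩
  · rw [expand f₁ hc₁, horth]
    simp only [← pow_two]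
    rw [hc₁def, div_mul_cancel₀ _ hn₁]
    ring
  · have horth' : (∫ x in a..b, f₂ x * f₁ x) = 0 := by
      simpa only [mul_comm] using horth
    rw [expand f₂ hc₂, horth']
    simp only [← pow_two]
    rw [hc₂def, div_mul_cancel₀ _ hn₂]
    ring
  · rw [Fintype.linearIndependent_iff]
    intro g hg
    -- Differentiating the relation twice says that the Wronskian matrix kills `g`.
    have r₀ : ∀ x, g 0 * f₁ x + g 1 * f₂ x + g 2 * f₃ x = 0 := fun x => by
      simpa [Fin.sum_univ_three] using congrFun hg x
    have r₁ : ∀ x, g 0 * deriv f₁ x + g 1 * deriv f₂ x + g 2 * deriv f₃ x = 0 := fun x => by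
      have h := (((d₁ x).const_mul (g 0)).add ((d₂ x).const_mul (g 1))).add
        ((d₃ x).differentiableAt.hasDerivAt.const_mul (g 2))
      exact h.unique ((hasDerivAt_const x (0 : ℝ)).congr_of_eventuallyEq (.of_forall r₀))
    have r₂ : ∀ x, g 0 * deriv (deriv f₁) x + g 1 * deriv (deriv f₂) x
        + g 2 * deriv (deriv f₃) x = 0 := fun x => by
      have h := (((dd₁ x).const_mul (g 0)).add ((dd₂ x).const_mul (g 1))).add
        ((dd₃ x).differentiableAt.hasDerivAt.const_mul (g 2))
      exact h.unique ((hasDerivAt_const x (0 : ℝ)).congr_of_eventuallyEq (.of_forall r₁))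
    refine congrFun (Matrix.eq_zero_of_mulVec_eq_zero
      (M := Matrix.of fun i j : Fin 3 => iteratedDeriv (i : ℕ) (![f₁, f₂, f₃] j) x₀) ?_ ?_)
    · exact (hwr x₀).trans_ne (hne x₀)
    · ext i
      fin_cases i
      · simpa [Matrix.mulVec, dotProduct, Fin.sum_univ_three, mul_comm] using r₀ x₀
      · simpa [Matrix.mulVec, dotProduct, Fin.sum_univ_three, mul_comm] using r₁ x₀
      · simpa [Matrix.mulVec, dotProduct, Fin.sum_univ_three, mul_comm,
          iteratedDeriv_succ] using r₂ x₀
end
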